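/- Let β = 1 and for each n let X ~ P_{1,Q^{CW}} be a Curie–Weiss Ising vector on {−1,1}^n. Then n^{1/4} · X̄_n converges in distribution to the random variable Y_0 whose law on R has density proportional to exp(−y⁴/12). -/

import Mathlib

open MeasureTheory ProbabilityTheory Filter Topology Matrix

noncomputable section

/-- The `±1` configuration associated to a boolean configuration. -/
def pmVec {ι : Type*} (s : ι → Bool) : ι → ℝ := fun i => if s i then 1 else -1

/-- Unnormalized Ising weight `exp((β/2) zᵀ Q z)`. -/
def isingWeight {ι : Type*} [Fintype ι] (β : ℝ) (Q : Matrix ι ι ℝ) (z : ι → ℝ) : ℝ :=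
  Real.exp (β / 2 * (z ⬝ᵥ Q.mulVec z))

/-- Ising partition function `Z(β,Q)`. -/
def isingZ (ι : Type*) [Fintype ι] [DecidableEq ι] (β : ℝ) (Q : Matrix ι ι ℝ) : ℝ :=
  ∑ s : ι → Bool, isingWeight β Q (pmVec s)

/-- The Ising probability measure `P_{β,Q}` on `{±1}^ι ⊆ ℝ^ι`:
`P(z) = exp((β/2) zᵀQz) / Z(β,Q)`. -/
def isingMeasure (ι : Type*) [Fintype ι] [DecidableEq ι] (β : ℝ) (Q : Matrix ι ι ℝ) :
    Measure (ι → ℝ) :=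
  ∑ s : ι → Bool,
    ENNReal.ofReal (isingWeight β Q (pmVec s) / isingZ ι β Q) • Measure.dirac (pmVec s)

/-- Sample mean `X̄ = (1/n) Σ_i X_i`. -/
def sampleMean {ι : Type*} [Fintype ι] (x : ι → ℝ) : ℝ := (∑ i, x i) / (Fintype.card ι : ℝ)

/-- Sample covariance `T_n = (1/n) Σ_i (X_i - X̄)(Y_i - Ȳ)`. -/
def sampleCov {ι : Type*} [Fintype ι] (x y : ι → ℝ) : ℝ :=
  (∑ i, (x i - sampleMean x) * (y i - sampleMean y)) / (Fintype.card ι : ℝ)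

/-- Convergence in distribution: weak convergence of the laws, tested against
bounded continuous functions. -/
def TendstoInDistribution (μ : ℕ → Measure ℝ) (ν : Measure ℝ) : Prop :=
  ∀ f : BoundedContinuousFunction ℝ ℝ,
    Tendsto (fun n => ∫ x, f x ∂(μ n)) atTop (𝓝 (∫ x, f x ∂ν))

/-- The Curie–Weiss interaction matrix `Q^{CW} = (1/n)(11ᵀ - I)`. -/
def QCW (n : ℕ) : Matrix (Fin n) (Fin n) ℝ := fun i j => if i = j then 0 else (n : ℝ)⁻¹

/-- `m(β)`: equal to `0` for `β ≤ 1`, and to the unique positive root of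
`m = tanh(β m)` for `β > 1`. -/
def isingMag (β : ℝ) : ℝ := sSup {m : ℝ | 0 ≤ m ∧ m = Real.tanh (β * m)}


/-- The law on `ℝ` with density proportional to `exp(-y⁴/12)`. -/
def quarticLaw : Measure ℝ :=
  volume.withDensity fun y =>
    ENNReal.ofReal (Real.exp (-(y ^ 4) / 12) / ∫ u : ℝ, Real.exp (-(u ^ 4) / 12))

/-!
Adding to `a X̄ₙ` an independent centred Gaussian of variance `a² / (β n)` completes the square in
the Curie–Weiss weight (the Hubbard–Stratonovich transform): the sum over spins factorizes, and
the smoothed variable has density proportional to `exp (n V(y / a))`, where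
`V(x) = log cosh (β x) - β x² / 2`. At `β = 1` the quadratic terms of `V` cancel, leaving
`V(x) = - x⁴ / 12 + o(x⁴)`, so the scale `a = n^{1/4}` makes `n V(y / a) → - y⁴ / 12`. The bound
`V(x) ≤ - x⁴ / (16 (4 + x²))` dominates these densities by a Gaussian, and the variance `n^{-1/2}`
of the added noise vanishes in the limit.
-/

-- The square of `v = u - u² / (4 (1 + u))` absorbs the defect `u - v`, since `v ≥ 3u / 4`.
lemma two_sub_exp_neg_le {u : ℝ} (hu : 0 ≤ u) :
    2 - Real.exp (-u) ≤ Real.exp (u - u ^ 2 / (4 * (1 + u))) := by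
  set v := u - u ^ 2 / (4 * (1 + u)) with hv_def
  have hv : 3 / 4 * u ≤ v := by
    have : u ^ 2 / (4 * (1 + u)) ≤ u / 4 := by
      rw [div_le_div_iff₀ (by positivity) (by norm_num)]
      nlinarith
    linarith
  have hdefect : u - v ≤ v ^ 2 / 2 := by
    have : u - v ≤ u ^ 2 / 4 := by
      rw [hv_def, sub_sub_cancel]
      gcongr
      linarith
    nlinarith
  have hexp_u := Real.add_one_le_exp (-u)
  have hexp_v := Real.quadratic_le_exp_of_nonneg (show 0 ≤ v by linarith)
  linarith

lemma cosh_le_exp_sq_sub (x : ℝ) :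
    Real.cosh x ≤ Real.exp (x ^ 2 / 2 - x ^ 4 / (16 * (4 + x ^ 2))) := by
  set u := x ^ 2 / 4 with hu
  have half_angle : Real.cosh x = 2 * Real.cosh (x / 2) ^ 2 - 1 := by
    have hdouble := Real.cosh_two_mul (x / 2)
    have hsq := Real.cosh_sq (x / 2)
    rw [mul_div_cancel₀ x two_ne_zero] at hdouble
    linarith
  have half_bound : Real.cosh (x / 2) ^ 2 ≤ Real.exp u := by
    calc Real.cosh (x / 2) ^ 2 ≤ Real.exp ((x / 2) ^ 2 / 2) ^ 2 := by
          gcongr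
          exact Real.cosh_le_exp_half_sq _
      _ = Real.exp u := by rw [← Real.exp_nat_mul, hu]; congr 1; push_cast; ring
  calc Real.cosh x ≤ Real.exp u * (2 - Real.exp (-u)) := by
        rw [mul_sub, ← Real.exp_add, add_neg_cancel, Real.exp_zero]
        linarith
    _ ≤ Real.exp u * Real.exp (u - u ^ 2 / (4 * (1 + u))) := by
        gcongr
        exact two_sub_exp_neg_le (by positivity)
    _ = Real.exp (x ^ 2 / 2 - x ^ 4 / (16 * (4 + x ^ 2))) := by
        rw [← Real.exp_add, hu]
        congr 1
        field_simp
        ring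

/-- The exponent `log cosh (β x) - β x² / 2` of the Laplace integrals to which the
Hubbard–Stratonovich transform reduces the Curie–Weiss model at inverse temperature `β`. -/
def curieWeissPotential (β x : ℝ) : ℝ := Real.log (Real.cosh (β * x)) - β * x ^ 2 / 2

lemma continuous_curieWeissPotential (β : ℝ) : Continuous (curieWeissPotential β) := by
  unfold curieWeissPotential
  have hne (x : ℝ) : Real.cosh (β * x) ≠ 0 := (Real.cosh_pos _).ne'
  fun_prop (disch := exact hne _)

lemma exp_curieWeissPotential (β x : ℝ) :
    Real.exp (curieWeissPotential β x) = Real.exp (-(β * x ^ 2 / 2)) * Real.cosh (β * x) := by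
  rw [curieWeissPotential, sub_eq_neg_add, Real.exp_add, Real.exp_log (Real.cosh_pos _)]

lemma curieWeissPotential_one_le (x : ℝ) :
    curieWeissPotential 1 x ≤ -(x ^ 4 / (16 * (4 + x ^ 2))) := by
  have h := (Real.log_le_iff_le_exp (Real.cosh_pos x)).2 (cosh_le_exp_sq_sub x)
  rw [curieWeissPotential, one_mul, one_mul]
  linarith

lemma mul_curieWeissPotential_one_div_le {a : ℝ} (ha : 1 ≤ a) (y : ℝ) :
    a ^ 4 * curieWeissPotential 1 (y / a) ≤ (4 - y ^ 2) / 16 := by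
  have : 0 < a := by linarith
  calc a ^ 4 * curieWeissPotential 1 (y / a)
      ≤ a ^ 4 * -((y / a) ^ 4 / (16 * (4 + (y / a) ^ 2))) := by
        gcongr
        exact curieWeissPotential_one_le _
    _ = -(y ^ 4 / (16 * (4 + (y / a) ^ 2))) := by rw [div_pow y a 4]; field_simp
    _ ≤ -(y ^ 4 / (16 * (4 + y ^ 2))) := by
        have hsq : (y / a) ^ 2 ≤ y ^ 2 :=
          div_pow y a 2 ▸ div_le_self (sq_nonneg y) (one_le_pow₀ ha)
        gcongr -(_ / (16 * (4 + ?_)))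
    _ ≤ (4 - y ^ 2) / 16 := by
        rw [← neg_div, div_le_div_iff₀ (by positivity) (by norm_num)]
        nlinarith

lemma exp_sub_sum_range_comp_isBigO {α : Type*} {l : Filter α} {f g : α → ℝ}
    (hf : Tendsto f l (𝓝 0)) (hfg : f =O[l] g) (k : ℕ) :
    (fun x => Real.exp (f x) - ∑ i ∈ Finset.range k, f x ^ i / (i.factorial : ℝ)) =O[l]
      fun x => g x ^ k :=
  ((Real.exp_sub_sum_range_isBigO_pow k).comp_tendsto hf).trans (hfg.pow k)

lemma isBigO_mul_nhds_zero {p : ℝ → ℝ} (hp : Continuous p) (q : ℝ → ℝ) :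
    (fun x => p x * q x) =O[𝓝 0] q := by
  simpa using ((hp.tendsto 0).isBigO_one ℝ).mul (Asymptotics.isBigO_refl q (𝓝 0))

-- Expanding the products `exp (± x - x² / 2)` directly avoids multiplying two Taylor expansions.
lemma exp_curieWeissPotential_one_isBigO :
    (fun x => Real.exp (curieWeissPotential 1 x) - (1 - x ^ 4 / 12)) =O[𝓝 0]
      (fun x : ℝ => x ^ 5) := by
  have expansion (c : ℝ) : (fun x : ℝ => Real.exp (c * x - x ^ 2 / 2)
      - ∑ i ∈ Finset.range 5, (c * x - x ^ 2 / 2) ^ i / (i.factorial : ℝ)) =O[𝓝 0]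
      (fun x : ℝ => x ^ 5) := by
    refine exp_sub_sum_range_comp_isBigO (Continuous.tendsto' (by fun_prop) _ _ (by simp)) ?_ 5
    refine (isBigO_mul_nhds_zero (p := fun x => c - x / 2) (by fun_prop) id).congr_left ?_
    intro x
    simp only [id]
    ring
  have remainder := isBigO_mul_nhds_zero
    (p := fun x => -(1 / 12) * x + x ^ 3 / 384 + x / 8) (by fun_prop) (fun x => x ^ 5)
  refine ((((expansion 1).add (expansion (-1))).const_mul_left (1 / 2)).add remainder).congr_left ?_
  intro x
  have hexp (c : ℝ) :
      Real.exp (c * x - x ^ 2 / 2) = Real.exp (-(x ^ 2 / 2)) * Real.exp (c * x) := by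
    rw [← Real.exp_add]
    congr 1
    ring
  rw [exp_curieWeissPotential, Real.cosh_eq, hexp, hexp]
  simp only [one_mul, neg_one_mul, Finset.sum_range_succ, Finset.sum_range_zero,
    Nat.factorial]
  push_cast
  ring

lemma curieWeissPotential_one_isLittleO :
    (fun x => curieWeissPotential 1 x - -(1 / 12) * x ^ 4) =o[𝓝 0] (fun x : ℝ => x ^ 4) := by
  have hexp : (fun x => Real.exp (curieWeissPotential 1 x) - 1 - -(1 / 12) * x ^ 4) =o[𝓝 0]
      (fun x : ℝ => x ^ 4) :=
    (exp_curieWeissPotential_one_isBigO.trans_isLittleO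
      (Asymptotics.isLittleO_pow_pow (by norm_num))).congr_left fun x => by ring
  have hexp_sub_one : (fun x => Real.exp (curieWeissPotential 1 x) - 1) =O[𝓝 0]
      (fun x : ℝ => x ^ 4) :=
    (hexp.isBigO.add ((Asymptotics.isBigO_refl _ _).const_mul_left (-(1 / 12)))).congr_left
      fun x => by ring
  have hlim : Tendsto (fun x => Real.exp (curieWeissPotential 1 x)) (𝓝 0) (𝓝 1) :=
    ((continuous_curieWeissPotential 1).rexp).tendsto' 0 1 (by simp [curieWeissPotential])
  have hlog := ((Real.hasDerivAt_log one_ne_zero).isLittleO.comp_tendsto hlim).trans_isBigO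
    hexp_sub_one
  refine (hlog.add hexp).congr_left fun x => ?_
  rw [Function.comp_apply, Real.log_exp, Real.log_one, inv_one, smul_eq_mul]
  ring

lemma tendsto_pow_mul_comp_div {f : ℝ → ℝ} {c : ℝ} {k : ℕ}
    (hf : (fun x => f x - c * x ^ k) =o[𝓝 0] (fun x => x ^ k))
    {α : Type*} {l : Filter α} {a : α → ℝ} (ha : Tendsto a l atTop) (y : ℝ) :
    Tendsto (fun i => a i ^ k * f (y / a i)) l (𝓝 (c * y ^ k)) := by
  have herr : (fun i => a i ^ k * (f (y / a i) - c * (y / a i) ^ k)) =o[l]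
      fun i => a i ^ k * (y / a i) ^ k :=
    (Asymptotics.isBigO_refl _ _).mul_isLittleO (hf.comp_tendsto (ha.const_div_atTop y))
  have hcancel : ∀ᶠ i in l, a i ^ k * (y / a i) ^ k = y ^ k := by
    filter_upwards [ha.eventually_ne_atTop 0] with i hi
    rw [← mul_pow, mul_div_cancel₀ y hi]
  have hzero : Tendsto (fun i => a i ^ k * (f (y / a i) - c * (y / a i) ^ k)) l (𝓝 0) :=
    (Asymptotics.isLittleO_one_iff ℝ).1 <|
      (herr.congr' .rfl hcancel).trans_isBigO (Asymptotics.isBigO_const_one ℝ (y ^ k) l)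
  rw [← zero_add (c * y ^ k)]
  refine (hzero.add_const _).congr' ?_
  filter_upwards [hcancel] with i hi
  linear_combination -c * hi

section Tilted

variable {α : Type*} [MeasurableSpace α] {μ : Measure α}

lemma withDensity_const_mul_exp_eq_tilted {V : α → ℝ} (hV : AEMeasurable V μ) (c : ENNReal)
    [IsProbabilityMeasure (μ.withDensity fun x => c * ENNReal.ofReal (Real.exp (V x)))] :
    (μ.withDensity fun x => c * ENNReal.ofReal (Real.exp (V x))) = μ.tilted V := by
  set L := ∫⁻ x, ENNReal.ofReal (Real.exp (V x)) ∂μ with hL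
  have hmass : c * L = 1 := by
    rw [hL, ← lintegral_const_mul'' _ (by fun_prop), ← setLIntegral_univ,
      ← withDensity_apply _ MeasurableSet.univ, measure_univ]
  have hL_ne_top : L ≠ ⊤ := by
    rintro h
    rw [h, ENNReal.mul_top'] at hmass
    split_ifs at hmass <;> simp at hmass
  have hL_pos : 0 < L.toReal :=
    ENNReal.toReal_pos (right_ne_zero_of_mul_eq_one hmass) hL_ne_top
  have hintegral : ∫ x, Real.exp (V x) ∂μ = L.toReal :=
    integral_eq_lintegral_of_nonneg_ae (ae_of_all _ fun x => (Real.exp_pos _).le) (by fun_prop)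
  rw [Measure.tilted, hintegral]
  congr 1 with x
  rw [ENNReal.ofReal_div_of_pos hL_pos, ENNReal.ofReal_toReal hL_ne_top,
    ENNReal.eq_inv_of_mul_eq_one_left hmass, mul_comm, div_eq_mul_inv]

lemma tendsto_integral_tilted {E : Type*} [NormedAddCommGroup E] [NormedSpace ℝ E] [NeZero μ]
    {ι : Type*} {l : Filter ι} [l.IsCountablyGenerated]
    {V : ι → α → ℝ} {V₀ : α → ℝ} {bound : α → ℝ} {f : α → E} {C : ℝ}
    (hf : AEStronglyMeasurable f μ) (hfC : ∀ᵐ x ∂μ, ‖f x‖ ≤ C)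
    (hV : ∀ᶠ i in l, AEMeasurable (V i) μ) (hbound : Integrable bound μ)
    (hV_le : ∀ᶠ i in l, ∀ᵐ x ∂μ, Real.exp (V i x) ≤ bound x)
    (hV₀ : Integrable (fun x => Real.exp (V₀ x)) μ)
    (hlim : ∀ᵐ x ∂μ, Tendsto (fun i => V i x) l (𝓝 (V₀ x))) :
    Tendsto (fun i => ∫ x, f x ∂(μ.tilted (V i))) l (𝓝 (∫ x, f x ∂(μ.tilted V₀))) := by
  have hnormalize (W : α → ℝ) :
      ∫ x, f x ∂(μ.tilted W) = (∫ x, Real.exp (W x) ∂μ)⁻¹ • ∫ x, Real.exp (W x) • f x ∂μ := by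
    simp_rw [integral_tilted, div_eq_inv_mul, mul_smul, integral_smul]
  have hpartition : Tendsto (fun i => ∫ x, Real.exp (V i x) ∂μ) l
      (𝓝 (∫ x, Real.exp (V₀ x) ∂μ)) := by
    refine tendsto_integral_filter_of_dominated_convergence bound ?_ ?_ hbound ?_
    · filter_upwards [hV] with i hi using hi.exp.aestronglyMeasurable
    · simpa only [Real.norm_eq_abs, Real.abs_exp] using hV_le
    · filter_upwards [hlim] with x hx using hx.rexp
  have hweighted : Tendsto (fun i => ∫ x, Real.exp (V i x) • f x ∂μ) l
      (𝓝 (∫ x, Real.exp (V₀ x) • f x ∂μ)) := by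
    refine tendsto_integral_filter_of_dominated_convergence (fun x => bound x * C) ?_ ?_
      (hbound.mul_const C) ?_
    · filter_upwards [hV] with i hi using hi.exp.aestronglyMeasurable.smul hf
    · filter_upwards [hV_le] with i hi
      filter_upwards [hi, hfC] with x hx hxC
      rw [norm_smul, Real.norm_eq_abs, Real.abs_exp]
      have := (Real.exp_pos _).le.trans hx
      gcongr
    · filter_upwards [hlim] with x hx using hx.rexp.smul_const _
  simp_rw [hnormalize]
  exact (hpartition.inv₀ (integral_exp_pos hV₀).ne').smul hweighted

end Tilted

lemma conv_gaussianReal_eq_withDensity (μ : Measure ℝ) [SFinite μ] {v : NNReal} (hv : v ≠ 0) :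
    μ ∗ gaussianReal 0 v = volume.withDensity fun y => ∫⁻ x, gaussianPDF x v y ∂μ := by
  have hpdf : Measurable fun p : ℝ × ℝ => gaussianPDF p.1 v p.2 := by fun_prop
  refine Measure.ext_of_lintegral _ fun f hf => ?_
  calc ∫⁻ z, f z ∂(μ ∗ gaussianReal 0 v)
      = ∫⁻ x, ∫⁻ y, f y ∂(gaussianReal x v) ∂μ := by
        rw [Measure.lintegral_conv hf]
        refine lintegral_congr fun x => ?_
        rw [← lintegral_map hf (measurable_const_add x), gaussianReal_map_const_add, zero_add]
    _ = ∫⁻ x, ∫⁻ y, gaussianPDF x v y * f y ∂volume ∂μ := by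
        refine lintegral_congr fun x => ?_
        rw [gaussianReal_of_var_ne_zero x hv]
        exact lintegral_withDensity_eq_lintegral_mul _ (measurable_gaussianPDF x v) hf
    _ = ∫⁻ y, ∫⁻ x, gaussianPDF x v y * f y ∂μ := by
        exact lintegral_lintegral_swap (by fun_prop)
    _ = ∫⁻ y, f y ∂(volume.withDensity fun y => ∫⁻ x, gaussianPDF x v y ∂μ) := by
        rw [lintegral_withDensity_eq_lintegral_mul _ hpdf.lintegral_prod_left' hf]
        refine lintegral_congr fun y => ?_
        exact lintegral_mul_const _ (by fun_prop)

lemma tendsto_charFun_of_conv_gaussianReal {ι : Type*} {l : Filter ι} {μ : ι → Measure ℝ}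
    [∀ i, IsFiniteMeasure (μ i)] {v : ι → NNReal} (hv : Tendsto v l (𝓝 0)) {t : ℝ} {z : ℂ}
    (h : Tendsto (fun i => charFun (μ i ∗ gaussianReal 0 (v i)) t) l (𝓝 z)) :
    Tendsto (fun i => charFun (μ i) t) l (𝓝 z) := by
  have hgauss : Tendsto (fun i => charFun (gaussianReal 0 (v i)) t) l (𝓝 1) := by
    have hcont : Continuous fun w : NNReal => charFun (gaussianReal 0 w) t := by
      simp only [charFun_gaussianReal]
      fun_prop
    simpa [Function.comp_def] using (hcont.tendsto 0).comp hv
  have hquot := h.div hgauss one_ne_zero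
  rw [div_one] at hquot
  refine hquot.congr fun i => ?_
  rw [Pi.div_apply, charFun_conv]
  refine mul_div_cancel_right₀ _ ?_
  rw [charFun_gaussianReal]
  exact Complex.exp_ne_zero _

lemma tendstoInDistribution_of_tendsto_charFun {μ : ℕ → Measure ℝ} {ν : Measure ℝ}
    [hμ : ∀ n, IsProbabilityMeasure (μ n)] [hν : IsProbabilityMeasure ν]
    (h : ∀ t, Tendsto (fun n => charFun (μ n) t) atTop (𝓝 (charFun ν t))) :
    TendstoInDistribution μ ν := by
  have hweak : Tendsto (β := ProbabilityMeasure ℝ) (fun n => ⟨μ n, hμ n⟩) atTop (𝓝 ⟨ν, hν⟩) :=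
    ProbabilityMeasure.tendsto_iff_tendsto_charFun.2 h
  exact ProbabilityMeasure.tendsto_iff_forall_integral_tendsto.1 hweak

lemma pmVec_mul_self {ι : Type*} (s : ι → Bool) (i : ι) : pmVec s i * pmVec s i = 1 := by
  unfold pmVec
  split_ifs <;> norm_num

section Ising

variable {ι : Type*} [Fintype ι]

lemma measurable_sampleMean : Measurable (sampleMean : (ι → ℝ) → ℝ) := by
  unfold sampleMean
  fun_prop

lemma sum_exp_mul_sum_pmVec [DecidableEq ι] (x : ℝ) :
    ∑ s : ι → Bool, Real.exp (x * ∑ i, pmVec s i) = (2 * Real.cosh x) ^ Fintype.card ι := by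
  have hcosh : 2 * Real.cosh x = ∑ b : Bool, Real.exp (x * if b then 1 else -1) := by
    simp [Real.cosh_eq]
    ring
  rw [hcosh, ← Finset.card_univ, ← Finset.prod_const, Finset.prod_univ_sum,
    Fintype.piFinset_univ]
  simp_rw [Finset.mul_sum, Real.exp_sum]
  rfl

variable (β : ℝ) (Q : Matrix ι ι ℝ)

lemma isingWeight_pos (z : ι → ℝ) : 0 < isingWeight β Q z := Real.exp_pos _

variable [DecidableEq ι]

lemma isingZ_pos : 0 < isingZ ι β Q :=
  Finset.sum_pos (fun _ _ => isingWeight_pos β Q _) Finset.univ_nonempty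

lemma lintegral_isingMeasure (f : (ι → ℝ) → ENNReal) :
    ∫⁻ x, f x ∂(isingMeasure ι β Q) =
      ∑ s : ι → Bool, ENNReal.ofReal (isingWeight β Q (pmVec s) / isingZ ι β Q) * f (pmVec s) := by
  simp only [isingMeasure, lintegral_finsetSum_measure, lintegral_smul_measure, lintegral_dirac,
    smul_eq_mul]

instance isProbabilityMeasure_isingMeasure : IsProbabilityMeasure (isingMeasure ι β Q) where
  measure_univ := by
    have hZ := isingZ_pos β Q
    rw [← lintegral_one, lintegral_isingMeasure]
    simp_rw [mul_one]
    rw [← ENNReal.ofReal_sum_of_nonneg fun s _ => div_nonneg (isingWeight_pos β Q _).le hZ.le,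
      ← Finset.sum_div, ← isingZ, div_self hZ.ne', ENNReal.ofReal_one]

instance isProbabilityMeasure_map_mul_sampleMean (a : ℝ) :
    IsProbabilityMeasure ((isingMeasure ι β Q).map fun x => a * sampleMean x) :=
  Measure.isProbabilityMeasure_map (measurable_sampleMean.const_mul a).aemeasurable

end Ising

lemma pmVec_dotProduct_QCW_mulVec {n : ℕ} (hn : n ≠ 0) (s : Fin n → Bool) :
    pmVec s ⬝ᵥ (QCW n).mulVec (pmVec s) = (∑ i, pmVec s i) ^ 2 / n - 1 := by
  have hmulVec (i : Fin n) : (QCW n).mulVec (pmVec s) i = (∑ j, pmVec s j - pmVec s i) / n := by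
    simp [QCW, Matrix.mulVec, dotProduct, ite_mul, Finset.sum_ite, Finset.filter_ne,
      Finset.sum_erase_eq_sub, ← Finset.mul_sum, div_eq_inv_mul]
  have hterm (i : Fin n) : pmVec s i * ((∑ j, pmVec s j - pmVec s i) / n) =
      pmVec s i * ((∑ j, pmVec s j) / n) - 1 / n := by
    linear_combination -(1 / n) * pmVec_mul_self s i
  simp_rw [dotProduct, hmulVec, hterm]
  rw [Finset.sum_sub_distrib, ← Finset.sum_mul, Finset.sum_const, Finset.card_univ,
    Fintype.card_fin, nsmul_eq_mul, mul_one_div_cancel (Nat.cast_ne_zero.2 hn)]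
  ring

lemma isingWeight_mul_gaussianPDFReal {n : ℕ} (hn : n ≠ 0) {β a : ℝ} (hβ : 0 < β) (ha : a ≠ 0)
    (s : Fin n → Bool) (y : ℝ) :
    isingWeight β (QCW n) (pmVec s) *
        gaussianPDFReal (a * sampleMean (pmVec s)) (a ^ 2 / (β * n)).toNNReal y =
      Real.exp (-β / 2) * (√(2 * Real.pi * (a ^ 2 / (β * n))))⁻¹ *
        (Real.exp (-(β * (y / a) ^ 2 / 2)) ^ n * Real.exp (β * (y / a) * ∑ i, pmVec s i)) := by
  have : (n : ℝ) ≠ 0 := Nat.cast_ne_zero.2 hn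
  rw [isingWeight, pmVec_dotProduct_QCW_mulVec hn, gaussianPDFReal, sampleMean, Fintype.card_fin,
    Real.coe_toNNReal _ (by positivity), ← Real.exp_nat_mul]
  have hexponent (S : ℝ) :
      β / 2 * (S ^ 2 / n - 1) + -(y - a * (S / n)) ^ 2 / (2 * (a ^ 2 / (β * n))) =
        -β / 2 + (n * -(β * (y / a) ^ 2 / 2) + β * (y / a) * S) := by
    field_simp
    ring
  rw [mul_left_comm, ← Real.exp_add, hexponent, Real.exp_add, Real.exp_add]
  ring

lemma sum_isingWeight_mul_gaussianPDFReal {n : ℕ} (hn : n ≠ 0) {β a : ℝ} (hβ : 0 < β)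
    (ha : a ≠ 0) (y : ℝ) :
    ∑ s : Fin n → Bool, isingWeight β (QCW n) (pmVec s) *
        gaussianPDFReal (a * sampleMean (pmVec s)) (a ^ 2 / (β * n)).toNNReal y =
      Real.exp (-β / 2) * (√(2 * Real.pi * (a ^ 2 / (β * n))))⁻¹ * 2 ^ n *
        Real.exp (n * curieWeissPotential β (y / a)) := by
  simp_rw [isingWeight_mul_gaussianPDFReal hn hβ ha, ← Finset.mul_sum, sum_exp_mul_sum_pmVec]
  rw [Fintype.card_fin, Real.exp_nat_mul, exp_curieWeissPotential, mul_pow, mul_pow]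
  ring

theorem map_isingMeasure_QCW_conv_gaussianReal {n : ℕ} (hn : n ≠ 0) {β a : ℝ} (hβ : 0 < β)
    (ha : a ≠ 0) :
    (isingMeasure (Fin n) β (QCW n)).map (fun x => a * sampleMean x) ∗
        gaussianReal 0 (a ^ 2 / (β * n)).toNNReal =
      volume.tilted fun y => n * curieWeissPotential β (y / a) := by
  set v := (a ^ 2 / (β * n)).toNNReal with hv_def
  set c := Real.exp (-β / 2) * (√(2 * Real.pi * (a ^ 2 / (β * n))))⁻¹ * 2 ^ n /
    isingZ (Fin n) β (QCW n) with hc_def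
  have hv : v ≠ 0 := (Real.toNNReal_pos.2 (by positivity)).ne'
  have hZ := isingZ_pos β (QCW n)
  have hc : 0 ≤ c := by positivity
  have hdensity (y : ℝ) :
      ∫⁻ m, gaussianPDF m v y ∂((isingMeasure (Fin n) β (QCW n)).map fun x => a * sampleMean x) =
        ENNReal.ofReal c * ENNReal.ofReal (Real.exp (n * curieWeissPotential β (y / a))) := by
    rw [lintegral_map (by fun_prop) (measurable_sampleMean.const_mul a), lintegral_isingMeasure,
      ← ENNReal.ofReal_mul hc]
    simp_rw [gaussianPDF, ← ENNReal.ofReal_mul (div_nonneg (isingWeight_pos β (QCW n) _).le hZ.le)]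
    rw [← ENNReal.ofReal_sum_of_nonneg fun s _ => mul_nonneg
      (div_nonneg (isingWeight_pos β (QCW n) _).le hZ.le) (gaussianPDFReal_nonneg _ _ _)]
    simp_rw [div_mul_eq_mul_div, ← Finset.sum_div, hv_def,
      sum_isingWeight_mul_gaussianPDFReal hn hβ ha]
    rw [hc_def, div_mul_eq_mul_div]
  have hconv := conv_gaussianReal_eq_withDensity
    ((isingMeasure (Fin n) β (QCW n)).map fun x => a * sampleMean x) hv
  simp_rw [hdensity] at hconv
  have : IsProbabilityMeasure (volume.withDensity fun y => ENNReal.ofReal c *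
      ENNReal.ofReal (Real.exp (n * curieWeissPotential β (y / a)))) := hconv ▸ inferInstance
  have hcont := continuous_curieWeissPotential β
  rw [hconv]
  exact withDensity_const_mul_exp_eq_tilted (Continuous.aemeasurable (by fun_prop)) _

lemma integrable_exp_four_sub_sq : Integrable fun y : ℝ => Real.exp ((4 - y ^ 2) / 16) := by
  convert (integrable_exp_neg_mul_sq (show (0 : ℝ) < 1 / 16 by norm_num)).const_mul
    (Real.exp (1 / 4)) using 2 with y
  rw [← Real.exp_add]
  congr 1
  ring

lemma integrable_exp_neg_pow_four_div : Integrable fun y : ℝ => Real.exp (-(y ^ 4) / 12) := by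
  refine integrable_exp_four_sub_sq.mono' (by fun_prop) (ae_of_all _ fun y => ?_)
  rw [Real.norm_eq_abs, Real.abs_exp]
  refine Real.exp_le_exp.2 ?_
  nlinarith [sq_nonneg (y ^ 2 - 1)]

lemma quarticLaw_eq_tilted : quarticLaw = volume.tilted fun y => -(y ^ 4) / 12 := rfl

instance isProbabilityMeasure_quarticLaw : IsProbabilityMeasure quarticLaw :=
  isProbabilityMeasure_tilted integrable_exp_neg_pow_four_div

lemma tendsto_charFun_tilted_curieWeissPotential {ι : Type*} {l : Filter ι}
    [l.IsCountablyGenerated] {a : ι → ℝ} (ha : Tendsto a l atTop) (t : ℝ) :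
    Tendsto
      (fun i => charFun (volume.tilted fun y => a i ^ 4 * curieWeissPotential 1 (y / a i)) t) l
      (𝓝 (charFun quarticLaw t)) := by
  have hcont := continuous_curieWeissPotential 1
  simp_rw [charFun_apply_real, quarticLaw_eq_tilted]
  refine tendsto_integral_tilted (C := 1) (by fun_prop) (ae_of_all _ fun y => ?_)
    (.of_forall fun i => Continuous.aemeasurable (by fun_prop)) integrable_exp_four_sub_sq ?_
    integrable_exp_neg_pow_four_div (ae_of_all _ fun y => ?_)
  · rw [← Complex.ofReal_mul, Complex.norm_exp_ofReal_mul_I]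
  · filter_upwards [ha.eventually_ge_atTop 1] with i hi
    exact ae_of_all _ fun y => Real.exp_le_exp.2 (mul_curieWeissPotential_one_div_le hi y)
  · convert tendsto_pow_mul_comp_div curieWeissPotential_one_isLittleO ha y using 2
    ring

lemma rpow_one_div_four_pow_four (n : ℕ) : ((n : ℝ) ^ ((1 : ℝ) / 4)) ^ 4 = n := by
  rw [← Real.rpow_mul_natCast (Nat.cast_nonneg n)]
  norm_num

lemma tendsto_rpow_one_div_four_sq_div :
    Tendsto (fun n : ℕ => (((n : ℝ) ^ ((1 : ℝ) / 4)) ^ 2 / n)) atTop (𝓝 0) := by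
  have hroot : Tendsto (fun n : ℕ => (n : ℝ) ^ ((1 : ℝ) / 2)) atTop atTop :=
    (tendsto_rpow_atTop (by norm_num)).comp tendsto_natCast_atTop_atTop
  refine hroot.inv_tendsto_atTop.congr' ?_
  filter_upwards [eventually_gt_atTop 0] with n hn
  have hn' : (0 : ℝ) < n := Nat.cast_pos.2 hn
  rw [Pi.inv_apply, ← Real.rpow_mul_natCast hn'.le, ← Real.rpow_neg hn'.le,
    ← Real.rpow_sub_one hn'.ne']
  norm_num

/-- **(Curie–Weiss CLT, critical `β = 1`).** If `X ~ P_{1,Q^{CW}}`, then `n^{1/4} X̄ₙ`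
converges in distribution to the law with density proportional to `exp(-y⁴/12)`. -/
theorem curieWeiss_clt_critical :
    TendstoInDistribution
      (fun n => Measure.map (fun x : Fin n → ℝ => (n : ℝ) ^ ((1 : ℝ) / 4) * sampleMean x)
        (isingMeasure (Fin n) 1 (QCW n)))
      quarticLaw := by
  have hroot : Tendsto (fun n : ℕ => (n : ℝ) ^ ((1 : ℝ) / 4)) atTop atTop :=
    (tendsto_rpow_atTop (by norm_num)).comp tendsto_natCast_atTop_atTop
  have hvar : Tendsto (fun n : ℕ => (((n : ℝ) ^ ((1 : ℝ) / 4)) ^ 2 / (1 * n)).toNNReal) atTop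
      (𝓝 0) := by
    simpa [Function.comp_def] using
      (continuous_real_toNNReal.tendsto 0).comp tendsto_rpow_one_div_four_sq_div
  refine tendstoInDistribution_of_tendsto_charFun fun t => ?_
  refine tendsto_charFun_of_conv_gaussianReal hvar ?_
  refine (tendsto_charFun_tilted_curieWeissPotential hroot t).congr' ?_
  filter_upwards [eventually_gt_atTop 0] with n hn
  rw [map_isingMeasure_QCW_conv_gaussianReal hn.ne' one_pos (by positivity),
    rpow_one_div_four_pow_four]

end
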